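/- For the five-qubit code with the error-correcting function φ₅: for every Pauli word g on 5 qubits supported in at most one qubit (i.e., g = P₁⊗⋯⊗P₅ with at most one Pⱼ ≠ I), one has φ₅(ε(g)) = g, and hence φ₅(ε(g))·g = I ∈ S₅; that is, the code corrects every single-qubit error with probability one. -/

import Mathlib

/-!
Two Pauli words commute up to the sign `(-1) ^ m`, where `m` counts the positions at which their
letters are distinct and both different from `I` (`pauliWord_comm`). Every Pauli word squares to the
identity (`pauliWord_mul_self`), so products of words are nonzero and this sign decides commutation:
the syndrome of a word is the vector of the counts `m` modulo 2 (`syndrome_pauliWord`). What remains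
is a comparison of `phi5Word` with these parities on the words `update 0 j a`, which is decidable
(`phi5Word_update`).
-/

open Matrix Kronecker
open scoped Classical

noncomputable section

/-- The four single-qubit Pauli matrices `I, X, Y, Z` (indexed `0,1,2,3`). -/
def PauliMat : Fin 4 → Matrix (Fin 2) (Fin 2) ℂ
  | 0 => 1
  | 1 => !![0, 1; 1, 0]
  | 2 => !![0, -Complex.I; Complex.I, 0]
  | 3 => !![1, 0; 0, -1]

/-- The allowed phases `{1, -1, i, -i}`. -/
def PauliPhase : Set ℂ := {1, -1, Complex.I, -Complex.I}

/-- The `n`-fold Kronecker product `P₁ ⊗ ⋯ ⊗ Pₙ` of single-qubit Pauli matrices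
(qubit 1 leftmost). -/
def pauliWord : (n : ℕ) → (Fin n → Fin 4) → Matrix (Fin (2 ^ n)) (Fin (2 ^ n)) ℂ
  | 0, _ => 1
  | n + 1, P =>
      Matrix.reindex (finProdFinEquiv.trans (finCongr (by ring)))
        (finProdFinEquiv.trans (finCongr (by ring)))
        (Matrix.kroneckerMap (· * ·) (PauliMat (P 0)) (pauliWord n (fun j => P j.succ)))

/-- The `n`-qubit Pauli group `Gⁿ`, as a set of `2ⁿ × 2ⁿ` complex matrices. -/
def PauliGroup (n : ℕ) : Set (Matrix (Fin (2 ^ n)) (Fin (2 ^ n)) ℂ) :=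
  {A | ∃ c ∈ PauliPhase, ∃ P : Fin n → Fin 4, A = c • pauliWord n P}

/-- The syndrome of `g` with respect to generators `gs`: the `i`-th component is `0`
if `g` commutes with `gs i` and `1` otherwise (for Pauli elements, "otherwise" means
anticommutes). -/
def syndrome {n r : ℕ} (gs : Fin r → Matrix (Fin (2 ^ n)) (Fin (2 ^ n)) ℂ)
    (g : Matrix (Fin (2 ^ n)) (Fin (2 ^ n)) ℂ) : Fin r → ZMod 2 :=
  fun i => if g * gs i = gs i * g then 0 else 1


/-- The four generators of the five-qubit code stabilizer:
g₁ = XZZXI, g₂ = IXZZX, g₃ = XIXZZ, g₄ = ZXIXZ. -/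
def fiveGens : Fin 4 → Matrix (Fin (2 ^ 5)) (Fin (2 ^ 5)) ℂ :=
  ![pauliWord 5 ![1, 3, 3, 1, 0], pauliWord 5 ![0, 1, 3, 3, 1],
    pauliWord 5 ![1, 0, 1, 3, 3], pauliWord 5 ![3, 1, 0, 1, 3]]

/-- The letters (as elements of Fin 4: 0 = I, 1 = X, 2 = Y, 3 = Z) of the Pauli word
assigned by the error-correcting function of the five-qubit code to a syndrome. -/
def phi5Word (e : Fin 4 → ZMod 2) : Fin 5 → Fin 4 :=
  if e = ![0, 0, 0, 0] then ![0, 0, 0, 0, 0]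
  else if e = ![0, 0, 0, 1] then ![1, 0, 0, 0, 0]
  else if e = ![0, 0, 1, 0] then ![0, 0, 3, 0, 0]
  else if e = ![0, 0, 1, 1] then ![0, 0, 0, 0, 1]
  else if e = ![0, 1, 0, 0] then ![0, 0, 0, 0, 3]
  else if e = ![0, 1, 0, 1] then ![0, 3, 0, 0, 0]
  else if e = ![0, 1, 1, 0] then ![0, 0, 0, 1, 0]
  else if e = ![0, 1, 1, 1] then ![0, 0, 0, 0, 2]
  else if e = ![1, 0, 0, 0] then ![0, 1, 0, 0, 0]
  else if e = ![1, 0, 0, 1] then ![0, 0, 0, 3, 0]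
  else if e = ![1, 0, 1, 0] then ![3, 0, 0, 0, 0]
  else if e = ![1, 0, 1, 1] then ![2, 0, 0, 0, 0]
  else if e = ![1, 1, 0, 0] then ![0, 0, 1, 0, 0]
  else if e = ![1, 1, 0, 1] then ![0, 2, 0, 0, 0]
  else if e = ![1, 1, 1, 0] then ![0, 0, 2, 0, 0]
  else ![0, 0, 0, 2, 0]

/-- The error-correcting function of the five-qubit code. -/
def phi5 (e : Fin 4 → ZMod 2) : Matrix (Fin (2 ^ 5)) (Fin (2 ^ 5)) ℂ :=
  pauliWord 5 (phi5Word e)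

/-- The number of positions at which the letters of two Pauli words anticommute, i.e. are distinct
and both different from `I`. -/
def anticommCount {n : ℕ} (P Q : Fin n → Fin 4) : ℕ :=
  ∑ i, if P i = 0 ∨ Q i = 0 ∨ P i = Q i then 0 else 1

lemma PauliMat_mul_self (a : Fin 4) : PauliMat a * PauliMat a = 1 := by
  fin_cases a <;> simp [PauliMat, Matrix.one_fin_two]

lemma PauliMat_comm (a b : Fin 4) :
    PauliMat a * PauliMat b =
      (-1 : ℂ) ^ (if a = 0 ∨ b = 0 ∨ a = b then 0 else 1) • (PauliMat b * PauliMat a) := by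
  fin_cases a <;> fin_cases b <;> simp [PauliMat]

lemma pauliWord_succ_mul (n : ℕ) (P Q : Fin (n + 1) → Fin 4) :
    pauliWord (n + 1) P * pauliWord (n + 1) Q =
      Matrix.reindex (finProdFinEquiv.trans (finCongr (by ring)))
        (finProdFinEquiv.trans (finCongr (by ring)))
        (Matrix.kroneckerMap (· * ·) (PauliMat (P 0) * PauliMat (Q 0))
          (pauliWord n (fun j => P j.succ) * pauliWord n (fun j => Q j.succ))) := by
  simp only [pauliWord, Matrix.reindex_apply, Matrix.submatrix_mul_equiv]
  rw [← Matrix.mul_kronecker_mul]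

lemma pauliWord_mul_self (n : ℕ) (P : Fin n → Fin 4) : pauliWord n P * pauliWord n P = 1 := by
  induction n with
  | zero => simp [pauliWord]
  | succ n ih =>
    rw [pauliWord_succ_mul, ih, PauliMat_mul_self, Matrix.one_kronecker_one, Matrix.reindex_apply,
      Matrix.submatrix_one_equiv]

lemma pauliWord_comm (n : ℕ) (P Q : Fin n → Fin 4) :
    pauliWord n P * pauliWord n Q =
      (-1 : ℂ) ^ anticommCount P Q • (pauliWord n Q * pauliWord n P) := by
  induction n with
  | zero => simp [pauliWord, anticommCount]
  | succ n ih =>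
    rw [pauliWord_succ_mul, pauliWord_succ_mul, ih, PauliMat_comm, Matrix.smul_kronecker,
      Matrix.kronecker_smul, smul_smul, ← pow_add]
    simp only [anticommCount, Fin.sum_univ_succ]
    rfl

/-- A product of two Pauli words is nonzero, so the sign in `pauliWord_comm` decides commutation. -/
lemma pauliWord_commute_iff (n : ℕ) (P Q : Fin n → Fin 4) :
    pauliWord n P * pauliWord n Q = pauliWord n Q * pauliWord n P ↔ Even (anticommCount P Q) := by
  rw [pauliWord_comm]
  rcases Nat.even_or_odd (anticommCount P Q) with h | h
  · simp [h]
  · simp only [h.neg_one_pow, neg_smul, one_smul, Nat.not_even_iff_odd.mpr h, iff_false]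
    intro h0
    have hz : pauliWord n Q * pauliWord n P = 0 := by
      ext i k
      exact self_eq_neg.mp (congrFun (congrFun h0 i) k).symm
    have h1 : pauliWord n Q * (pauliWord n Q * pauliWord n P) * pauliWord n P = 1 := by
      rw [← mul_assoc, pauliWord_mul_self, one_mul, pauliWord_mul_self]
    rw [hz, mul_zero, zero_mul] at h1
    exact zero_ne_one h1

/-- The letters of the generators in `fiveGens`. -/
def fiveGenWord : Fin 4 → Fin 5 → Fin 4 :=
  ![![1, 3, 3, 1, 0], ![0, 1, 3, 3, 1], ![1, 0, 1, 3, 3], ![3, 1, 0, 1, 3]]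

lemma fiveGens_eq (i : Fin 4) : fiveGens i = pauliWord 5 (fiveGenWord i) := by
  fin_cases i <;> rfl

lemma syndrome_pauliWord (P : Fin 5 → Fin 4) :
    syndrome fiveGens (pauliWord 5 P) =
      fun i => (anticommCount P (fiveGenWord i) : ZMod 2) := by
  funext i
  simp only [syndrome, fiveGens_eq, pauliWord_commute_iff]
  split_ifs with h
  · exact ((ZMod.natCast_eq_zero_iff_even).mpr h).symm
  · exact ((ZMod.natCast_eq_one_iff_odd).mpr (Nat.not_even_iff_odd.mp h)).symm

lemma phi5Word_update (j : Fin 5) (a : Fin 4) :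
    phi5Word (fun i =>
        (anticommCount (Function.update (0 : Fin 5 → Fin 4) j a) (fiveGenWord i) : ZMod 2)) =
      Function.update (0 : Fin 5 → Fin 4) j a := by
  revert j a
  decide +kernel

/-- the five-qubit code corrects every single-qubit error with
probability one: for every Pauli word g supported in at most one qubit,
φ₅(ε(g)) = g and φ₅(ε(g))·g = I ∈ S₅. -/
theorem fiveQubit_corrects_single_qubit_errors
    (P : Fin 5 → Fin 4) (hP : ∃ j, ∀ i, i ≠ j → P i = 0) :
    phi5 (syndrome fiveGens (pauliWord 5 P)) = pauliWord 5 P ∧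
    phi5 (syndrome fiveGens (pauliWord 5 P)) * pauliWord 5 P = 1 ∧
    phi5 (syndrome fiveGens (pauliWord 5 P)) * pauliWord 5 P ∈
      Submonoid.closure (Set.range fiveGens) := by
  obtain ⟨j, hj⟩ := hP
  have hPj : P = Function.update (0 : Fin 5 → Fin 4) j (P j) := by
    funext i
    by_cases h : i = j
    · subst h; simp
    · simp [h, hj i h]
  have hphi : phi5 (syndrome fiveGens (pauliWord 5 P)) = pauliWord 5 P := by
    rw [phi5, syndrome_pauliWord, hPj, phi5Word_update]
  rw [hphi, pauliWord_mul_self]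
  exact ⟨rfl, rfl, one_mem _⟩

end
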